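/- arXiv:2308.12959 — 2 statements merged into one kernel-verified Lean document; each statement's English description precedes it below -/
import Mathlib

section
/- Channel divergence bound for generalized depolarizing channels: Let 𝔇 assign to each pair of states on any finite-dimensional space an element of the extended reals such that 𝔇(Φ(ρ)‖Φ(σ)) ≤ 𝔇(ρ‖σ) for every quantum channel Φ and all states ρ, σ (data-processing inequality). For a state τ on ℂ^d and λ ∈ [0,1] let Λ^λ_τ : M_d(ℂ) → M_d(ℂ) be the generalized depolarizing channel Λ^λ_τ(ω) := (1−λ)·ω + λ·Tr(ω)·τ. Then for all states ρ, σ on ℂ^d, all λ ∈ [0,1] and all n ≥ 1, the channel divergence satisfies 𝔇((Λ^λ_ρ)^{⊗n} ‖ (Λ^λ_σ)^{⊗n}) ≤ 𝔇(ρ^{⊗n} ‖ σ^{⊗n}). -/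
open scoped Kronecker ComplexOrder

noncomputable section

namespace QCD

attribute [local instance] Classical.propDecidable

variable {n m : Type} [Fintype n] [DecidableEq n] [Fintype m] [DecidableEq m]

/-- The real part of the trace of a complex matrix. -/
def rtr (A : Matrix n n ℂ) : ℝ := (A.trace).re

/-- A quantum state: positive semidefinite with trace one. -/
def IsState (ρ : Matrix n n ℂ) : Prop := ρ.PosSemidef ∧ ρ.trace = 1

/-- Loewner order: `A ≤ B` iff `B - A` is positive semidefinite. -/
def loewnerLE (A B : Matrix n n ℂ) : Prop := (B - A).PosSemidef

/-- Support containment (for PSD matrices): `ker σ ⊆ ker ρ`. -/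
def SuppLE (ρ σ : Matrix n n ℂ) : Prop := ∀ v : n → ℂ, σ.mulVec v = 0 → ρ.mulVec v = 0

/-- Functional calculus for Hermitian matrices (junk value `0` otherwise). -/
def matFun (f : ℝ → ℝ) (A : Matrix n n ℂ) : Matrix n n ℂ :=
  if hA : A.IsHermitian then
    (hA.eigenvectorUnitary : Matrix n n ℂ) *
      Matrix.diagonal (fun i => (f (hA.eigenvalues i) : ℂ)) *
      (star (hA.eigenvectorUnitary : Matrix n n ℂ))
  else 0

/-- Matrix square root via functional calculus. -/
def msqrt (A : Matrix n n ℂ) : Matrix n n ℂ := matFun Real.sqrt A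

/-- Matrix real power taken on the support (`0 ^ t := 0`). -/
def mpow (A : Matrix n n ℂ) (t : ℝ) : Matrix n n ℂ :=
  matFun (fun x => if x = 0 then 0 else x ^ t) A

/-- Matrix base-2 logarithm on the support. -/
def mlog (A : Matrix n n ℂ) : Matrix n n ℂ := matFun (Real.logb 2) A

/-- Positive part of a Hermitian matrix. -/
def mposPart (A : Matrix n n ℂ) : Matrix n n ℂ := matFun (fun x => max x 0) A

/-- Trace norm. -/
def traceNorm (A : Matrix n m ℂ) : ℝ := rtr (msqrt (A.conjTranspose * A))

/-- Base-2 logarithm as an extended real (`⊥` on nonpositive input). -/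
def elog (x : ℝ) : EReal := if x ≤ 0 then ⊥ else ((Real.logb 2 x : ℝ) : EReal)

/-- Base-2 logarithm of an extended real. -/
def elogE (x : EReal) : EReal := if x = ⊤ then ⊤ else elog x.toReal

/-- `2 ^ x` for an extended real `x`. -/
def epow2 (x : EReal) : EReal :=
  if x = ⊤ then ⊤ else if x = ⊥ then 0 else ((((2:ℝ) ^ x.toReal : ℝ)) : EReal)

/-- Umegaki relative entropy (base 2), `⊤` if the support condition fails. -/
def relEntropy (ρ σ : Matrix n n ℂ) : EReal :=
  if SuppLE ρ σ then ((rtr (ρ * (mlog ρ - mlog σ)) : ℝ) : EReal) else ⊤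

/-- Petz–Rényi divergence (base 2). -/
def petzRenyi (α : ℝ) (ρ σ : Matrix n n ℂ) : EReal :=
  if 1 < α ∧ ¬ SuppLE ρ σ then ⊤
  else (((α - 1)⁻¹ : ℝ) : EReal) * elog (rtr (mpow ρ α * mpow σ (1 - α)))

/-- Geometric (maximal) Rényi divergence (base 2). -/
def geomRenyi (α : ℝ) (ρ σ : Matrix n n ℂ) : EReal :=
  if SuppLE ρ σ then
    (((α - 1)⁻¹ : ℝ) : EReal) *
      elog (rtr (σ * mpow (mpow σ (-(1/2 : ℝ)) * ρ * mpow σ (-(1/2 : ℝ))) α))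
  else ⊤

/-- Max-relative entropy (base 2). -/
def dMax (ρ σ : Matrix n n ℂ) : EReal :=
  sInf {x : EReal | ∃ lam : ℝ, x = (lam : EReal) ∧ loewnerLE ρ ((((2:ℝ) ^ lam : ℝ) : ℂ) • σ)}

/-- Uhlmann fidelity. -/
def fidelity (ρ σ : Matrix n n ℂ) : ℝ := (rtr (msqrt (msqrt σ * ρ * msqrt σ))) ^ 2

/-- Sine (purified) distance. -/
def sineDist (ρ σ : Matrix n n ℂ) : ℝ := Real.sqrt (1 - fidelity ρ σ)

/-- Smoothed max-relative entropy: smoothing over states in the sine-distance ball. -/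
def dMaxSmooth (δ : ℝ) (ρ σ : Matrix n n ℂ) : EReal :=
  ⨅ (ρ' : Matrix n n ℂ) (_ : IsState ρ' ∧ sineDist ρ ρ' ≤ δ), dMax ρ' σ

/-- Hypothesis testing divergence (base 2). -/
def dH (ε : ℝ) (ρ σ : Matrix n n ℂ) : EReal :=
  - elog (sInf {x : ℝ | ∃ T : Matrix n n ℂ,
      T.PosSemidef ∧ ((1 : Matrix n n ℂ) - T).PosSemidef ∧ 1 - ε ≤ rtr (T * ρ) ∧ x = rtr (T * σ)})

/-- The quantity `c_γ(ρ‖σ)`. -/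
def cGamma (γ : ℝ) (ρ σ : Matrix n n ℂ) : EReal :=
  ((γ⁻¹ : ℝ) : EReal) *
    elogE (epow2 ((γ : ℝ) * petzRenyi (1 + γ) ρ σ) +
           epow2 (((-γ : ℝ) : EReal) * petzRenyi (1 - γ) ρ σ) + 1)

/-- Binary entropy (base 2). -/
def binEnt (x : ℝ) : ℝ := -(x * Real.logb 2 x) - (1 - x) * Real.logb 2 (1 - x)

/-- Action of `id_k ⊗ Φ` on block matrices. -/
def blockApply {k : Type} (Φ : Matrix n n ℂ →ₗ[ℂ] Matrix m m ℂ)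
    (M : Matrix (k × n) (k × n) ℂ) : Matrix (k × m) (k × m) ℂ :=
  Matrix.of fun p q => Φ (Matrix.of fun a b => M (p.1, a) (q.1, b)) p.2 q.2

/-- Action of `Φ ⊗ id_k` on block matrices. -/
def blockApplyRight {k : Type} (Φ : Matrix n n ℂ →ₗ[ℂ] Matrix m m ℂ)
    (M : Matrix (n × k) (n × k) ℂ) : Matrix (m × k) (m × k) ℂ :=
  Matrix.of fun p q => Φ (Matrix.of fun a b => M (a, p.2) (b, q.2)) p.1 q.1

/-- Quantum channel: trace preserving and completely positive. -/
def IsQChannel (Φ : Matrix n n ℂ →ₗ[ℂ] Matrix m m ℂ) : Prop :=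
  (∀ M : Matrix n n ℂ, (Φ M).trace = M.trace) ∧
  (∀ k : ℕ, 1 ≤ k → ∀ M : Matrix (Fin k × n) (Fin k × n) ℂ, M.PosSemidef →
    (blockApply Φ M).PosSemidef)

/-- `id_k ⊗ Φ` as a linear map. -/
def blockApplyL (k : Type) (Φ : Matrix n n ℂ →ₗ[ℂ] Matrix m m ℂ) :
    Matrix (k × n) (k × n) ℂ →ₗ[ℂ] Matrix (k × m) (k × m) ℂ where
  toFun := blockApply Φ
  map_add' M N := by
    ext p q
    show Φ (Matrix.of fun a b => (M + N) (p.1, a) (q.1, b)) p.2 q.2 = _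
    have h : (Matrix.of fun a b => (M + N) (p.1, a) (q.1, b)) =
        (Matrix.of fun a b => M (p.1, a) (q.1, b)) +
          (Matrix.of fun a b => N (p.1, a) (q.1, b)) := rfl
    rw [h, map_add]
    rfl
  map_smul' c M := by
    ext p q
    show Φ (Matrix.of fun a b => (c • M) (p.1, a) (q.1, b)) p.2 q.2 = _
    have h : (Matrix.of fun a b => (c • M) (p.1, a) (q.1, b)) =
        c • (Matrix.of fun a b => M (p.1, a) (q.1, b)) := rfl
    rw [h, map_smul]
    rfl

/-- `Φ ⊗ id_k` as a linear map. -/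
def blockApplyRightL (k : Type) (Φ : Matrix n n ℂ →ₗ[ℂ] Matrix m m ℂ) :
    Matrix (n × k) (n × k) ℂ →ₗ[ℂ] Matrix (m × k) (m × k) ℂ where
  toFun := blockApplyRight Φ
  map_add' M N := by
    ext p q
    show Φ (Matrix.of fun a b => (M + N) (a, p.2) (b, q.2)) p.1 q.1 = _
    have h : (Matrix.of fun a b => (M + N) (a, p.2) (b, q.2)) =
        (Matrix.of fun a b => M (a, p.2) (b, q.2)) +
          (Matrix.of fun a b => N (a, p.2) (b, q.2)) := rfl
    rw [h, map_add]
    rfl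
  map_smul' c M := by
    ext p q
    show Φ (Matrix.of fun a b => (c • M) (a, p.2) (b, q.2)) p.1 q.1 = _
    have h : (Matrix.of fun a b => (c • M) (a, p.2) (b, q.2)) =
        c • (Matrix.of fun a b => M (a, p.2) (b, q.2)) := rfl
    rw [h, map_smul]
    rfl

/-- Tensor product of two channels (Kronecker product action). -/
def tensorChannel {n₁ m₁ n₂ m₂ : Type}
    (E₁ : Matrix n₁ n₁ ℂ →ₗ[ℂ] Matrix m₁ m₁ ℂ) (E₂ : Matrix n₂ n₂ ℂ →ₗ[ℂ] Matrix m₂ m₂ ℂ) :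
    Matrix (n₁ × n₂) (n₁ × n₂) ℂ →ₗ[ℂ] Matrix (m₁ × m₂) (m₁ × m₂) ℂ :=
  (blockApplyRightL m₂ E₁).comp (blockApplyL n₁ E₂)

/-- Index type for `k`-fold tensor powers. -/
def tpow (ι : Type) : ℕ → Type
  | 0 => PUnit
  | (k+1) => tpow ι k × ι

def tpowFintype (ι : Type) [Fintype ι] : ∀ k : ℕ, Fintype (tpow ι k)
  | 0 => inferInstanceAs (Fintype PUnit)
  | (k+1) => letI := tpowFintype ι k; inferInstanceAs (Fintype (tpow ι k × ι))

instance (ι : Type) [Fintype ι] (k : ℕ) : Fintype (tpow ι k) := tpowFintype ι k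

def tpowDecEq (ι : Type) [DecidableEq ι] : ∀ k : ℕ, DecidableEq (tpow ι k)
  | 0 => inferInstanceAs (DecidableEq PUnit)
  | (k+1) => letI := tpowDecEq ι k; inferInstanceAs (DecidableEq (tpow ι k × ι))

instance (ι : Type) [DecidableEq ι] (k : ℕ) : DecidableEq (tpow ι k) := tpowDecEq ι k

/-- `k`-fold Kronecker tensor power of a matrix. -/
def tpowMat (ρ : Matrix n n ℂ) : ∀ k : ℕ, Matrix (tpow n k) (tpow n k) ℂ
  | 0 => 1
  | (k+1) => (tpowMat ρ k) ⊗ₖ ρ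

/-- `k`-fold tensor power of a channel. -/
def tpowChannel (Φ : Matrix n n ℂ →ₗ[ℂ] Matrix m m ℂ) :
    ∀ k : ℕ, Matrix (tpow n k) (tpow n k) ℂ →ₗ[ℂ] Matrix (tpow m k) (tpow m k) ℂ
  | 0 => LinearMap.id
  | (k+1) => tensorChannel (tpowChannel Φ k) Φ

/-- Channel divergence induced by a divergence `𝔇` on states:
sup over `k ≥ 1` and input states `ν` on `ℂ^k ⊗ ℂ^d`. -/
def chDiv (𝔇 : ∀ (p : Type) [Fintype p] [DecidableEq p], Matrix p p ℂ → Matrix p p ℂ → EReal)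
    (E F : Matrix n n ℂ →ₗ[ℂ] Matrix m m ℂ) : EReal :=
  ⨆ (k : ℕ) (_ : 1 ≤ k) (ν : Matrix (Fin k × n) (Fin k × n) ℂ) (_ : IsState ν),
    𝔇 (Fin k × m) (blockApply E ν) (blockApply F ν)

/-- The geometric Rényi divergence as a divergence family. -/
def geomD (α : ℝ) : ∀ (p : Type) [Fintype p] [DecidableEq p],
    Matrix p p ℂ → Matrix p p ℂ → EReal :=
  fun _ _ _ => geomRenyi α

/-- The Umegaki relative entropy as a divergence family. -/
def relD : ∀ (p : Type) [Fintype p] [DecidableEq p],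
    Matrix p p ℂ → Matrix p p ℂ → EReal :=
  fun _ _ _ => relEntropy

/-- The hypothesis testing divergence as a divergence family. -/
def dHD (ε : ℝ) : ∀ (p : Type) [Fintype p] [DecidableEq p],
    Matrix p p ℂ → Matrix p p ℂ → EReal :=
  fun _ _ _ => dH ε

/-- Regularized channel relative entropy. -/
def regRelEntropy (E F : Matrix n n ℂ →ₗ[ℂ] Matrix m m ℂ) : EReal :=
  ⨆ (k : ℕ) (_ : 1 ≤ k),
    (((k : ℝ)⁻¹ : ℝ) : EReal) * chDiv relD (tpowChannel E k) (tpowChannel F k)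

end QCD

namespace QCD

/-- The generalized depolarizing channel `ω ↦ (1-λ) ω + λ Tr(ω) τ`. -/
def genDepol {n : Type} [Fintype n] [DecidableEq n] (lam : ℝ) (τ : Matrix n n ℂ) :
    Matrix n n ℂ →ₗ[ℂ] Matrix n n ℂ :=
  (((1 - lam : ℝ) : ℂ)) • LinearMap.id +
    ((lam : ℝ) : ℂ) • ((Matrix.traceLinearMap n ℂ ℂ).smulRight τ)

/-! The map `Λ^λ_τ` reads `τ` as data: it tensors its input with the program state `τ` and then
applies a channel independent of `τ`, namely discarding the program with probability `1 - λ` and the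
input with probability `λ`. Such an implementation is inherited by tensor powers, the program of the
`k`-th power being `τ^{⊗k}`. For a fixed input state `ν`, the outputs of two channels sharing a
processor are thus the images of their programs under one channel (attach `ν`, then run the
processor), and the data-processing inequality bounds their divergence by that of the programs. -/

section Channels

variable {n m p q : Type} [Fintype n] [Fintype m] [Fintype p] [Fintype q]

theorem IsQChannel.posSemidef_blockApply {k : Type} [Finite k]
    {Φ : Matrix n n ℂ →ₗ[ℂ] Matrix m m ℂ} (hΦ : IsQChannel Φ) {M : Matrix (k × n) (k × n) ℂ}
    (hM : M.PosSemidef) : (blockApply Φ M).PosSemidef := by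
  cases isEmpty_or_nonempty k with
  | inl _ => exact Subsingleton.elim 0 (blockApply Φ M) ▸ Matrix.PosSemidef.zero
  | inr _ =>
    let e := Finite.equivFin k
    let M' := M.submatrix (Prod.map e.symm id) (Prod.map e.symm id)
    have blockApply_eq : blockApply Φ M =
        (blockApply Φ M').submatrix (Prod.map e id) (Prod.map e id) := by
      ext
      simp [blockApply, M']
    rw [blockApply_eq]
    exact (hΦ.2 (Nat.card k) Nat.card_pos M' (hM.submatrix _)).submatrix _

theorem IsQChannel.comp {Φ : Matrix n n ℂ →ₗ[ℂ] Matrix m m ℂ} {Ψ : Matrix m m ℂ →ₗ[ℂ] Matrix p p ℂ}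
    (hΨ : IsQChannel Ψ) (hΦ : IsQChannel Φ) : IsQChannel (Ψ ∘ₗ Φ) :=
  ⟨fun M => (hΨ.1 (Φ M)).trans (hΦ.1 M), fun j hj M hM => hΨ.2 j hj _ (hΦ.2 j hj M hM)⟩

theorem IsQChannel.convexCombination {Φ Ψ : Matrix n n ℂ →ₗ[ℂ] Matrix m m ℂ} (hΦ : IsQChannel Φ)
    (hΨ : IsQChannel Ψ) {a b : ℝ} (ha : 0 ≤ a) (hb : 0 ≤ b) (hab : a + b = 1) :
    IsQChannel ((a : ℂ) • Φ + (b : ℂ) • Ψ) := by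
  refine ⟨fun M => ?_, fun j hj M hM => ?_⟩
  · rw [LinearMap.add_apply, LinearMap.smul_apply, LinearMap.smul_apply, Matrix.trace_add,
      Matrix.trace_smul, Matrix.trace_smul, hΦ.1, hΨ.1, ← add_smul, ← Complex.ofReal_add, hab,
      Complex.ofReal_one, one_smul]
  · exact ((hΦ.2 j hj M hM).smul (Complex.zero_le_real.2 ha)).add
      ((hΨ.2 j hj M hM).smul (Complex.zero_le_real.2 hb))

theorem isQChannel_reindex (e : n ≃ m) :
    IsQChannel (Matrix.reindexLinearEquiv ℂ ℂ e e).toLinearMap :=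
  ⟨fun M => e.symm.sum_comp fun i => M i i, fun _ _ _ hM => hM.submatrix (Prod.map id e.symm)⟩

theorem isQChannel_kronecker {ν : Matrix n n ℂ} (hν : IsState ν) :
    IsQChannel (Matrix.kroneckerBilinear (R := ℂ) ν :
      Matrix p p ℂ →ₗ[ℂ] Matrix (n × p) (n × p) ℂ) := by
  refine ⟨fun M => ?_, fun j _ M hM => ?_⟩
  · exact (Matrix.trace_kronecker ν M).trans (by rw [hν.2, one_mul])
  · exact (hν.1.kronecker hM).submatrix fun x : Fin j × n × p => (x.2.1, (x.1, x.2.2))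

protected theorem IsQChannel.blockApplyL {k : Type} [Fintype k]
    {Φ : Matrix n n ℂ →ₗ[ℂ] Matrix m m ℂ} (hΦ : IsQChannel Φ) : IsQChannel (blockApplyL k Φ) := by
  refine ⟨fun M => ?_, fun j _ M hM => ?_⟩
  · calc (blockApply Φ M).trace
        = ∑ i, (Φ (Matrix.of fun a b => M (i, a) (i, b))).trace := Fintype.sum_prod_type _
      _ = ∑ i, ∑ a, M (i, a) (i, a) := Finset.sum_congr rfl fun i _ => hΦ.1 _
      _ = M.trace := (Fintype.sum_prod_type fun x => M x x).symm
  · exact (hΦ.posSemidef_blockApply (hM.submatrix (Equiv.prodAssoc (Fin j) k n))).submatrix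
      (Equiv.prodAssoc (Fin j) k m).symm

protected theorem IsQChannel.blockApplyRightL {k : Type} [Fintype k]
    {Φ : Matrix n n ℂ →ₗ[ℂ] Matrix m m ℂ} (hΦ : IsQChannel Φ) : IsQChannel (blockApplyRightL k Φ) :=
  (isQChannel_reindex (Equiv.prodComm k m)).comp
    (hΦ.blockApplyL.comp (isQChannel_reindex (Equiv.prodComm n k)))

protected theorem IsQChannel.tensorChannel {Φ : Matrix n n ℂ →ₗ[ℂ] Matrix m m ℂ}
    {Ψ : Matrix p p ℂ →ₗ[ℂ] Matrix q q ℂ} (hΦ : IsQChannel Φ) (hΨ : IsQChannel Ψ) :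
    IsQChannel (tensorChannel Φ Ψ) :=
  hΦ.blockApplyRightL.comp hΨ.blockApplyL

theorem IsState.kronecker {ρ : Matrix n n ℂ} {σ : Matrix p p ℂ} (hρ : IsState ρ)
    (hσ : IsState σ) : IsState (ρ ⊗ₖ σ) :=
  ⟨hρ.1.kronecker hσ.1, by rw [Matrix.trace_kronecker, hρ.2, hσ.2, one_mul]⟩

protected theorem IsState.tpowMat [DecidableEq n] {ρ : Matrix n n ℂ} (hρ : IsState ρ) :
    ∀ j : ℕ, IsState (tpowMat ρ j)
  | 0 => ⟨Matrix.PosSemidef.one, Matrix.trace_one (n := PUnit) |>.trans (by simp)⟩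
  | j + 1 => (hρ.tpowMat j).kronecker hρ

/-- The partial trace `id ⊗ Tr` over the second tensor factor. -/
def partialTraceRight (n p : Type) [Fintype p] :
    Matrix (n × p) (n × p) ℂ →ₗ[ℂ] Matrix n n ℂ where
  toFun M := Matrix.of fun i j => ∑ x, M (i, x) (j, x)
  map_add' M N := by
    ext
    simp [Finset.sum_add_distrib]
  map_smul' c M := by
    ext
    simp [Finset.mul_sum]

theorem partialTraceRight_apply {n p : Type} [Fintype p] (M : Matrix (n × p) (n × p) ℂ) (i j : n) :
    partialTraceRight n p M i j = ∑ x, M (i, x) (j, x) :=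
  rfl

/-- The partial trace `Tr ⊗ id` over the first tensor factor. -/
def partialTraceLeft (n p : Type) [Fintype n] :
    Matrix (n × p) (n × p) ℂ →ₗ[ℂ] Matrix p p ℂ :=
  partialTraceRight p n ∘ₗ
    (Matrix.reindexLinearEquiv ℂ ℂ (Equiv.prodComm n p) (Equiv.prodComm n p)).toLinearMap

theorem isQChannel_partialTraceRight : IsQChannel (partialTraceRight n p) := by
  refine ⟨fun M => ?_, fun j _ M hM => ?_⟩
  · exact (Fintype.sum_prod_type fun x => M x x).symm
  · have sum_submatrix : blockApply (partialTraceRight n p) M =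
        ∑ x, M.submatrix (fun i => (i.1, (i.2, x))) (fun i => (i.1, (i.2, x))) := by
      ext i j
      simp [blockApply, partialTraceRight_apply, Matrix.sum_apply]
    rw [sum_submatrix]
    exact Matrix.posSemidef_sum _ fun x _ => hM.submatrix _

theorem isQChannel_partialTraceLeft : IsQChannel (partialTraceLeft n p) :=
  isQChannel_partialTraceRight.comp (isQChannel_reindex _)

theorem partialTraceRight_kronecker {n p : Type} [Fintype p] (A : Matrix n n ℂ)
    (B : Matrix p p ℂ) : partialTraceRight n p (A ⊗ₖ B) = B.trace • A := by
  ext i j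
  simp [partialTraceRight_apply, Matrix.trace, Finset.mul_sum, mul_comm]

theorem partialTraceLeft_kronecker {n p : Type} [Fintype n] (A : Matrix n n ℂ)
    (B : Matrix p p ℂ) : partialTraceLeft n p (A ⊗ₖ B) = A.trace • B := by
  ext i j
  simp [partialTraceLeft, partialTraceRight_apply, Matrix.trace, Finset.sum_mul]

end Channels

section Processors

variable {n n' m m' p p' : Type}

/-- The processor `P`, acting on input and program register, implements the map `E` when its program
register holds `τ`. -/
def Implements (P : Matrix (n × p) (n × p) ℂ →ₗ[ℂ] Matrix m m ℂ) (τ : Matrix p p ℂ)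
    (E : Matrix n n ℂ →ₗ[ℂ] Matrix m m ℂ) : Prop :=
  ∀ ω, P (ω ⊗ₖ τ) = E ω

/-- Two processors run in parallel, with the two inputs and the two programs grouped together. -/
def tensorProcessor (P : Matrix (n × p) (n × p) ℂ →ₗ[ℂ] Matrix m m ℂ)
    (P' : Matrix (n' × p') (n' × p') ℂ →ₗ[ℂ] Matrix m' m' ℂ) :
    Matrix ((n × n') × (p × p')) ((n × n') × (p × p')) ℂ →ₗ[ℂ] Matrix (m × m') (m × m') ℂ :=
  tensorChannel P P' ∘ₗ (Matrix.reindexLinearEquiv ℂ ℂ (Equiv.prodProdProdComm n n' p p')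
    (Equiv.prodProdProdComm n n' p p')).toLinearMap

/-- The processor for `k`-fold tensor powers of the maps implemented by `P`, whose programs are
`k`-fold tensor powers. -/
def tpowProcessor (P : Matrix (n × p) (n × p) ℂ →ₗ[ℂ] Matrix m m ℂ) :
    ∀ k : ℕ, Matrix (tpow n k × tpow p k) (tpow n k × tpow p k) ℂ →ₗ[ℂ]
      Matrix (tpow m k) (tpow m k) ℂ
  | 0 => partialTraceRight PUnit PUnit
  | k + 1 => tensorProcessor (tpowProcessor P k) P

theorem Implements.tensor
    {P : Matrix (n × p) (n × p) ℂ →ₗ[ℂ] Matrix m m ℂ}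
    {P' : Matrix (n' × p') (n' × p') ℂ →ₗ[ℂ] Matrix m' m' ℂ}
    {τ : Matrix p p ℂ} {τ' : Matrix p' p' ℂ}
    {E : Matrix n n ℂ →ₗ[ℂ] Matrix m m ℂ} {E' : Matrix n' n' ℂ →ₗ[ℂ] Matrix m' m' ℂ}
    (h : Implements P τ E) (h' : Implements P' τ' E') :
    Implements (tensorProcessor P P') (τ ⊗ₖ τ') (tensorChannel E E') := by
  intro ω
  have run_second (a b : n × p) :
      P' (Matrix.of fun c d => ω (a.1, c.1) (b.1, d.1) * (τ a.2 b.2 * τ' c.2 d.2)) =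
        τ a.2 b.2 • E' (Matrix.of fun c d => ω (a.1, c) (b.1, d)) := by
    rw [← h', ← map_smul]
    refine congrArg P' (Matrix.ext fun c d => ?_)
    simp [mul_left_comm]
  ext x y
  calc tensorProcessor P P' (ω ⊗ₖ (τ ⊗ₖ τ')) x y
      = P (Matrix.of fun a b => P' (Matrix.of fun c d =>
          ω (a.1, c.1) (b.1, d.1) * (τ a.2 b.2 * τ' c.2 d.2)) x.2 y.2) x.1 y.1 := rfl
    _ = P ((Matrix.of fun a b => E' (Matrix.of fun c d => ω (a, c) (b, d)) x.2 y.2) ⊗ₖ τ)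
          x.1 y.1 := by
        refine congr_fun₂ (congrArg P (Matrix.ext fun a b => ?_)) x.1 y.1
        exact (congr_fun₂ (run_second a b) x.2 y.2).trans (mul_comm _ _)
    _ = tensorChannel E E' ω x y := by
        rw [h]
        rfl

protected theorem Implements.tpow [DecidableEq p]
    {P : Matrix (n × p) (n × p) ℂ →ₗ[ℂ] Matrix m m ℂ} {τ : Matrix p p ℂ}
    {E : Matrix n n ℂ →ₗ[ℂ] Matrix m m ℂ} (h : Implements P τ E) :
    ∀ k, Implements (tpowProcessor P k) (tpowMat τ k) (tpowChannel E k)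
  | 0 => fun ω => by
    have partialTrace_one (A : Matrix PUnit PUnit ℂ) :
        partialTraceRight PUnit PUnit (A ⊗ₖ (1 : Matrix PUnit PUnit ℂ)) = A := by
      rw [partialTraceRight_kronecker, Matrix.trace_one, Fintype.card_punit, Nat.cast_one, one_smul]
    exact partialTrace_one ω
  | k + 1 => (h.tpow k).tensor h

protected theorem IsQChannel.tpowProcessor [Fintype n] [Fintype m] [Fintype p]
    {P : Matrix (n × p) (n × p) ℂ →ₗ[ℂ] Matrix m m ℂ} (hP : IsQChannel P) :
    ∀ k, IsQChannel (tpowProcessor P k)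
  | 0 => isQChannel_partialTraceRight
  | k + 1 => ((hP.tpowProcessor k).tensorChannel hP).comp (isQChannel_reindex _)

end Processors

section Divergence

/-- The data-processing inequality for a divergence between states. -/
def DataProcessing
    (𝔇 : ∀ (p : Type) [Fintype p] [DecidableEq p], Matrix p p ℂ → Matrix p p ℂ → EReal) : Prop :=
  ∀ (p q : Type) [Fintype p] [DecidableEq p] [Fintype q] [DecidableEq q]
    (Φ : Matrix p p ℂ →ₗ[ℂ] Matrix q q ℂ), IsQChannel Φ →
    ∀ ρ σ : Matrix p p ℂ, IsState ρ → IsState σ → 𝔇 q (Φ ρ) (Φ σ) ≤ 𝔇 p ρ σ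

variable {𝔇 : ∀ (p : Type) [Fintype p] [DecidableEq p], Matrix p p ℂ → Matrix p p ℂ → EReal}
  {n m p : Type} [Fintype n] [Fintype m] [DecidableEq m]
  [Fintype p] [DecidableEq p] {P : Matrix (n × p) (n × p) ℂ →ₗ[ℂ] Matrix m m ℂ}
  {τ τ' : Matrix p p ℂ} {E F : Matrix n n ℂ →ₗ[ℂ] Matrix m m ℂ}

theorem chDiv_le_of_implements (h𝔇 : DataProcessing 𝔇) (hP : IsQChannel P) (hτ : IsState τ)
    (hτ' : IsState τ') (hE : Implements P τ E) (hF : Implements P τ' F) :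
    chDiv 𝔇 E F ≤ 𝔇 p τ τ' := by
  refine iSup₂_le fun k _ => iSup₂_le fun ν hν => ?_
  let runOn : Matrix p p ℂ →ₗ[ℂ] Matrix (Fin k × m) (Fin k × m) ℂ := blockApplyL (Fin k) P ∘ₗ
    (Matrix.reindexLinearEquiv ℂ ℂ (Equiv.prodAssoc (Fin k) n p)
      (Equiv.prodAssoc (Fin k) n p)).toLinearMap ∘ₗ Matrix.kroneckerBilinear (R := ℂ) ν
  have isQChannel_runOn : IsQChannel runOn :=
    hP.blockApplyL.comp ((isQChannel_reindex _).comp (isQChannel_kronecker hν))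
  have runOn_apply {τ E} (h : Implements P τ E) : runOn τ = blockApply E ν := by
    ext i j
    exact congr_fun₂ (h (Matrix.of fun a b => ν (i.1, a) (j.1, b))) i.2 j.2
  rw [← runOn_apply hE, ← runOn_apply hF]
  exact h𝔇 _ _ runOn isQChannel_runOn τ τ' hτ hτ'

theorem chDiv_tpowChannel_le_of_implements (h𝔇 : DataProcessing 𝔇) (hP : IsQChannel P)
    (hτ : IsState τ) (hτ' : IsState τ') (hE : Implements P τ E) (hF : Implements P τ' F) (k : ℕ) :
    chDiv 𝔇 (tpowChannel E k) (tpowChannel F k) ≤ 𝔇 _ (tpowMat τ k) (tpowMat τ' k) :=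
  chDiv_le_of_implements h𝔇 (hP.tpowProcessor k) (hτ.tpowMat k) (hτ'.tpowMat k) (hE.tpow k)
    (hF.tpow k)

end Divergence

section Depolarizing

/-- The processor implementing the depolarizing channels `genDepol lam τ` with program `τ`: it keeps
the input with probability `1 - lam` and returns the program instead with probability `lam`. -/
def depolProcessor (n : Type) [Fintype n] (lam : ℝ) :
    Matrix (n × n) (n × n) ℂ →ₗ[ℂ] Matrix n n ℂ :=
  ((1 - lam : ℝ) : ℂ) • partialTraceRight n n + (lam : ℂ) • partialTraceLeft n n

variable {n : Type} [Fintype n] {lam : ℝ}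

theorem isQChannel_depolProcessor (h₀ : 0 ≤ lam) (h₁ : lam ≤ 1) :
    IsQChannel (depolProcessor n lam) :=
  isQChannel_partialTraceRight.convexCombination isQChannel_partialTraceLeft (sub_nonneg.2 h₁) h₀
    (sub_add_cancel 1 lam)

theorem implements_genDepol [DecidableEq n] (lam : ℝ) {τ : Matrix n n ℂ} (hτ : τ.trace = 1) :
    Implements (depolProcessor n lam) τ (genDepol lam τ) := fun ω => by
  simp [depolProcessor, genDepol, partialTraceRight_kronecker, partialTraceLeft_kronecker, hτ]

theorem depolarizing_channelDiv_le_general [DecidableEq n]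
    (𝔇 : ∀ (p : Type) [Fintype p] [DecidableEq p], Matrix p p ℂ → Matrix p p ℂ → EReal)
    (h𝔇 : DataProcessing 𝔇) {ρ σ : Matrix n n ℂ} (hρ : IsState ρ) (hσ : IsState σ)
    (h₀ : 0 ≤ lam) (h₁ : lam ≤ 1) (k : ℕ) :
    chDiv 𝔇 (tpowChannel (genDepol lam ρ) k) (tpowChannel (genDepol lam σ) k) ≤
      𝔇 _ (tpowMat ρ k) (tpowMat σ k) :=
  chDiv_tpowChannel_le_of_implements h𝔇 (isQChannel_depolProcessor h₀ h₁) hρ hσ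
    (implements_genDepol lam hρ.2) (implements_genDepol lam hσ.2) k

end Depolarizing

/-- Channel divergence bound for generalized depolarizing channels. -/
theorem depolarizing_channelDiv_le
    (𝔇 : ∀ (p : Type) [Fintype p] [DecidableEq p], Matrix p p ℂ → Matrix p p ℂ → EReal)
    (hDPI : ∀ (p q : Type) [Fintype p] [DecidableEq p] [Fintype q] [DecidableEq q]
      (Φ : Matrix p p ℂ →ₗ[ℂ] Matrix q q ℂ), IsQChannel Φ →
      ∀ ρ σ : Matrix p p ℂ, IsState ρ → IsState σ → 𝔇 q (Φ ρ) (Φ σ) ≤ 𝔇 p ρ σ)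
    {d : ℕ} (ρ σ : Matrix (Fin d) (Fin d) ℂ) (hρ : IsState ρ) (hσ : IsState σ)
    (lam : ℝ) (hlam : 0 ≤ lam ∧ lam ≤ 1) (n : ℕ) (hn : 1 ≤ n) :
    chDiv 𝔇 (tpowChannel (genDepol lam ρ) n) (tpowChannel (genDepol lam σ) n) ≤
      𝔇 _ (tpowMat ρ n) (tpowMat σ n) :=
  depolarizing_channelDiv_le_general 𝔇 hDPI hρ hσ hlam.1 hlam.2 n

end QCD
end
end

section
/- Anti-monotonicity of the geometric Rényi divergence in the second argument: Let ρ be a state on ℂ^d, let σ₁, σ₂ be positive semidefinite d×d complex matrices with σ₁ ≤ σ₂ in the Loewner order, and let α ∈ (1,2]. Then 𝐷̂_α(ρ‖σ₁) ≥ 𝐷̂_α(ρ‖σ₂) in the extended reals. -/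
open scoped Kronecker ComplexOrder

noncomputable section

namespace QCD

attribute [local instance] Classical.propDecidable

variable {n m : Type} [Fintype n] [DecidableEq n] [Fintype m] [DecidableEq m]

end QCD

namespace QCD

/-!
Factor `ρ = B Bᴴ` and put `A = σ^{-1/2} B`. Since `A Aᴴ` and `Aᴴ A` are intertwined by `A`,
`(A Aᴴ)^α = A (Aᴴ A)^(α-1) Aᴴ`, so when the support of `ρ` lies in that of `σ`,
`Tr[σ (σ^{-1/2} ρ σ^{-1/2})^α] = Tr[Bᴴ B (Bᴴ σ⁻¹ B)^(α-1)]`. Here `Bᴴ σ⁻¹ B` is antitone in `σ`: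
for `σ₁ Z₁ = B = σ₂ Z₂` the difference `Z₁ᴴ σ₁ Z₁ - Z₂ᴴ σ₂ Z₂` is the sum of the squares
`(Z₁ - Z₂)ᴴ σ₁ (Z₁ - Z₂)` and `Z₂ᴴ (σ₂ - σ₁) Z₂`. As `0 < α - 1 ≤ 1`, the Löwner–Heinz inequality
carries this over to the power `α - 1`.
-/

open Matrix

section FunctionalCalculus

variable {n m : Type} [Fintype n] [DecidableEq n] [Fintype m] [DecidableEq m]

lemma matFun_eq_cfc (f : ℝ → ℝ) {A : Matrix n n ℂ} (hA : A.IsHermitian) :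
    matFun f A = cfc f A := by
  rw [hA.cfc_eq, matFun, dif_pos hA, IsHermitian.cfc, Unitary.conjStarAlgAut_apply]
  rfl

lemma matFun_id {A : Matrix n n ℂ} (hA : A.IsHermitian) : matFun (fun x => x) A = A := by
  rw [matFun_eq_cfc _ hA]
  exact cfc_id' ℝ A hA

lemma isHermitian_matFun (f : ℝ → ℝ) (A : Matrix n n ℂ) : (matFun f A).IsHermitian := by
  by_cases hA : A.IsHermitian
  · rw [matFun_eq_cfc f hA]
    exact cfc_predicate f A
  · rw [matFun, dif_neg hA]
    exact isHermitian_zero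

lemma matFun_mul_matFun (f g : ℝ → ℝ) (A : Matrix n n ℂ) :
    matFun f A * matFun g A = matFun (fun x => f x * g x) A := by
  by_cases hA : A.IsHermitian
  · simp only [matFun_eq_cfc _ hA]
    exact (cfc_mul f g A (A.finite_real_spectrum.continuousOn f)
      (A.finite_real_spectrum.continuousOn g)).symm
  · simp only [matFun, dif_neg hA, mul_zero]

lemma matFun_congr_of_posSemidef {f g : ℝ → ℝ} {A : Matrix n n ℂ} (hA : A.PosSemidef)
    (hfg : ∀ x, 0 ≤ x → f x = g x) : matFun f A = matFun g A := by
  simp only [matFun, hfg _ (hA.eigenvalues_nonneg _)]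

lemma diagonal_comp_mul_eq_mul_diagonal_comp {a : n → ℝ} {b : m → ℝ} {W : Matrix n m ℂ}
    (h : diagonal (fun i => (a i : ℂ)) * W = W * diagonal (fun j => (b j : ℂ))) (f : ℝ → ℝ) :
    diagonal (fun i => (f (a i) : ℂ)) * W = W * diagonal (fun j => (f (b j) : ℂ)) := by
  ext i j
  have hij : (a i : ℂ) * W i j = W i j * b j := by
    simpa only [diagonal_mul, mul_diagonal] using congrFun₂ h i j
  rw [diagonal_mul, mul_diagonal]
  by_cases hW : W i j = 0
  · rw [hW, mul_zero, zero_mul]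
  · have hab : a i = b j := by
      rw [mul_comm] at hij
      exact_mod_cast mul_left_cancel₀ hW hij
    rw [hab, mul_comm]

lemma exists_unitary_forall_matFun_eq {A : Matrix n n ℂ} (hA : A.IsHermitian) :
    ∃ U ∈ unitaryGroup n ℂ, ∃ a : n → ℝ, ∀ f : ℝ → ℝ,
      matFun f A = U * diagonal (fun i => (f (a i) : ℂ)) * star U :=
  ⟨hA.eigenvectorUnitary, SetLike.coe_mem _, hA.eigenvalues, fun _ => dif_pos hA⟩

lemma matFun_mul_eq_mul_matFun {X : Matrix n n ℂ} {Y : Matrix m m ℂ} {A : Matrix n m ℂ}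
    (hX : X.IsHermitian) (hY : Y.IsHermitian) (h : X * A = A * Y) (f : ℝ → ℝ) :
    matFun f X * A = A * matFun f Y := by
  obtain ⟨U, hU, a, hXf⟩ := exists_unitary_forall_matFun_eq hX
  obtain ⟨V, hV, b, hYf⟩ := exists_unitary_forall_matFun_eq hY
  have hA_diag : diagonal (fun i => (a i : ℂ)) * (star U * A * V) =
      star U * A * V * diagonal (fun j => (b j : ℂ)) := by
    rw [← matFun_id hX, ← matFun_id hY, hXf, hYf] at h
    calc diagonal (fun i => (a i : ℂ)) * (star U * A * V)
        = star U * (U * diagonal (fun i => (a i : ℂ)) * star U * A) * V := by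
          simp only [← Matrix.mul_assoc, hU.1, Matrix.one_mul]
      _ = star U * A * V * diagonal (fun j => (b j : ℂ)) := by
          rw [h]
          simp only [Matrix.mul_assoc, hV.1, Matrix.mul_one]
  calc matFun f X * A
      = U * (diagonal (fun i => (f (a i) : ℂ)) * (star U * A * V)) * star V := by
        rw [hXf]
        simp only [Matrix.mul_assoc, hV.2, Matrix.mul_one]
    _ = A * matFun f Y := by
        rw [diagonal_comp_mul_eq_mul_diagonal_comp hA_diag, hYf]
        simp only [← Matrix.mul_assoc, hU.2, Matrix.one_mul]

end FunctionalCalculus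

section LoewnerOrder

variable {n m : Type} [Fintype n]

lemma rtr_nonneg {A : Matrix n n ℂ} (hA : A.PosSemidef) : 0 ≤ rtr A :=
  (Complex.le_def.mp hA.trace_nonneg).1

lemma rtr_conjTranspose_mul_self_mul_mono [Fintype m] (B : Matrix n m ℂ) {X Y : Matrix m m ℂ}
    (h : loewnerLE X Y) : rtr (Bᴴ * B * X) ≤ rtr (Bᴴ * B * Y) := by
  rw [← sub_nonneg]
  calc 0 ≤ rtr (B * (Y - X) * Bᴴ) := rtr_nonneg (h.mul_mul_conjTranspose_same B)
    _ = rtr (Bᴴ * B * Y) - rtr (Bᴴ * B * X) := by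
      rw [rtr, rtr, rtr, trace_mul_cycle, mul_sub, trace_sub, Complex.sub_re]

lemma posSemidef_of_loewnerLE {A B : Matrix m m ℂ} (hA : A.PosSemidef) (h : loewnerLE A B) :
    B.PosSemidef :=
  add_sub_cancel A B ▸ hA.add h

lemma SuppLE.mul_eq_zero {ρ σ : Matrix n n ℂ} (h : SuppLE ρ σ) {X : Matrix n m ℂ}
    (hX : σ * X = 0) : ρ * X = 0 := by
  ext i j
  exact congrFun (h (fun k => X k j) (funext fun k => congrFun₂ hX k j)) i

lemma SuppLE.of_loewnerLE {ρ σ₁ σ₂ : Matrix n n ℂ} (hρ : SuppLE ρ σ₁) (hσ₁ : σ₁.PosSemidef)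
    (h : loewnerLE σ₁ σ₂) : SuppLE ρ σ₂ := by
  intro v hv
  refine hρ v ((hσ₁.dotProduct_mulVec_zero_iff v).mp (le_antisymm ?_ ?_))
  · simpa [sub_mulVec, hv] using h.dotProduct_mulVec_nonneg v
  · exact hσ₁.dotProduct_mulVec_nonneg v

lemma loewnerLE_conj_of_mul_eq_mul [Finite m] {σ₁ σ₂ : Matrix n n ℂ} (hσ₁ : σ₁.PosSemidef)
    (h : loewnerLE σ₁ σ₂) {Z₁ Z₂ : Matrix n m ℂ} (hZ : σ₁ * Z₁ = σ₂ * Z₂) :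
    loewnerLE (Z₂ᴴ * σ₂ * Z₂) (Z₁ᴴ * σ₁ * Z₁) := by
  have hσ₂ : σ₂.IsHermitian := (posSemidef_of_loewnerLE hσ₁ h).1
  have hZ' : Z₁ᴴ * σ₁ = Z₂ᴴ * σ₂ := by
    simpa only [conjTranspose_mul, hσ₁.1.eq, hσ₂.eq] using congrArg conjTranspose hZ
  have hcross : Z₂ᴴ * σ₁ * Z₁ = Z₂ᴴ * σ₂ * Z₂ := by
    rw [Matrix.mul_assoc, hZ, Matrix.mul_assoc]
  have hcompl : Z₁ᴴ * σ₁ * Z₁ - Z₂ᴴ * σ₂ * Z₂ =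
      (Z₁ - Z₂)ᴴ * σ₁ * (Z₁ - Z₂) + Z₂ᴴ * (σ₂ - σ₁) * Z₂ := by
    simp only [conjTranspose_sub, Matrix.sub_mul, Matrix.mul_sub, hcross, hZ']
    abel
  rw [loewnerLE, hcompl]
  exact (hσ₁.conjTranspose_mul_mul_same _).add (h.conjTranspose_mul_mul_same _)

end LoewnerOrder

section Powers

variable {n m : Type} [Fintype n] [DecidableEq n] [Fintype m] [DecidableEq m]

lemma isHermitian_mpow (A : Matrix n n ℂ) (t : ℝ) : (mpow A t).IsHermitian :=
  isHermitian_matFun _ A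

lemma mpow_one {A : Matrix n n ℂ} (hA : A.IsHermitian) : mpow A 1 = A := by
  have hfun : (fun x : ℝ => if x = 0 then 0 else x ^ (1 : ℝ)) = fun x => x := by
    ext x
    split_ifs with hx
    · exact hx.symm
    · exact Real.rpow_one x
  rw [mpow, hfun, matFun_id hA]

lemma mpow_mul_mpow {A : Matrix n n ℂ} (hA : A.PosSemidef) (s t : ℝ) :
    mpow A s * mpow A t = mpow A (s + t) := by
  simp only [mpow, matFun_mul_matFun]
  refine matFun_congr_of_posSemidef hA fun x hx => ?_
  split_ifs with hx0
  · exact mul_zero 0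
  · exact (Real.rpow_add (hx.lt_of_ne' hx0) s t).symm

lemma mul_mpow {A : Matrix n n ℂ} (hA : A.PosSemidef) (t : ℝ) :
    A * mpow A t = mpow A (1 + t) := by
  rw [← mpow_mul_mpow hA, mpow_one hA.1]

lemma posSemidef_mpow {A : Matrix n n ℂ} (hA : A.PosSemidef) (t : ℝ) : (mpow A t).PosSemidef := by
  rw [← add_halves t, ← mpow_mul_mpow hA]
  nth_rw 1 [← (isHermitian_mpow A (t / 2)).eq]
  exact posSemidef_conjTranspose_mul_self _

lemma mpow_mul_conjTranspose_self (A : Matrix n m ℂ) (t : ℝ) :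
    mpow (A * Aᴴ) t = A * mpow (Aᴴ * A) (t - 1) * Aᴴ := by
  have hX : (A * Aᴴ).PosSemidef := posSemidef_self_mul_conjTranspose A
  have hY : (Aᴴ * A).PosSemidef := posSemidef_conjTranspose_mul_self A
  calc mpow (A * Aᴴ) t
      = mpow (A * Aᴴ) (t - 1) * mpow (A * Aᴴ) 1 := by rw [mpow_mul_mpow hX, sub_add_cancel]
    _ = mpow (A * Aᴴ) (t - 1) * A * Aᴴ := by rw [mpow_one hX.1, Matrix.mul_assoc]
    _ = A * mpow (Aᴴ * A) (t - 1) * Aᴴ := by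
      rw [mpow, matFun_mul_eq_mul_matFun hX.1 hY.1 (Matrix.mul_assoc A Aᴴ A), mpow]

open scoped MatrixOrder in
lemma mpow_eq_rpow {A : Matrix n n ℂ} (hA : A.PosSemidef) {t : ℝ} (ht : t ≠ 0) :
    mpow A t = A ^ t := by
  rw [CFC.rpow_eq_cfc_real hA.nonneg, ← matFun_eq_cfc _ hA.1, mpow]
  congr with x
  split_ifs with hx
  · rw [hx, Real.zero_rpow ht]
  · rfl

open scoped MatrixOrder Matrix.Norms.L2Operator in
lemma loewnerLE_mpow {A B : Matrix n n ℂ} (hA : A.PosSemidef) (hAB : loewnerLE A B)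
    {t : ℝ} (ht₀ : 0 < t) (ht₁ : t ≤ 1) : loewnerLE (mpow A t) (mpow B t) := by
  rw [mpow_eq_rpow hA ht₀.ne', mpow_eq_rpow (posSemidef_of_loewnerLE hA hAB) ht₀.ne']
  exact CFC.rpow_le_rpow ⟨ht₀.le, ht₁⟩ (Matrix.le_iff.mpr hAB)

end Powers

section GeometricRenyi

variable {n m : Type} [Fintype n] [DecidableEq n] [Fintype m]

lemma mpow_zero_mul_of_suppLE {σ : Matrix n n ℂ} (hσ : σ.PosSemidef) (B : Matrix n m ℂ)
    (hB : SuppLE (B * Bᴴ) σ) : mpow σ 0 * B = B := by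
  have hker : σ * (1 - mpow σ 0) = 0 := by
    rw [mul_sub, mul_one, mul_mpow hσ, add_zero, mpow_one hσ.1, sub_self]
  have hB_adj : Bᴴ * (1 - mpow σ 0) = 0 :=
    (self_mul_conjTranspose_mul_eq_zero B _).mp (hB.mul_eq_zero hker)
  have hB_zero : (1 - mpow σ 0) * B = 0 := by
    simpa only [conjTranspose_mul, conjTranspose_sub, conjTranspose_one,
      conjTranspose_conjTranspose, (isHermitian_mpow σ 0).eq, conjTranspose_zero]
      using congrArg conjTranspose hB_adj
  rwa [Matrix.sub_mul, Matrix.one_mul, sub_eq_zero, eq_comm] at hB_zero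

/-- The quantity `Q̂_α(ρ‖σ) = Tr[σ (σ^{-1/2} ρ σ^{-1/2})^α]`, whose normalized logarithm is the
geometric Rényi divergence. Powers of `σ` are taken on its support. -/
def geomQuasi (α : ℝ) (ρ σ : Matrix n n ℂ) : ℝ :=
  rtr (σ * mpow (mpow σ (-(1 / 2 : ℝ)) * ρ * mpow σ (-(1 / 2 : ℝ))) α)

lemma geomQuasi_mul_conjTranspose_self [DecidableEq m] {σ : Matrix n n ℂ} (hσ : σ.PosSemidef)
    (B : Matrix n m ℂ) (hB : SuppLE (B * Bᴴ) σ) (α : ℝ) :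
    geomQuasi α (B * Bᴴ) σ = rtr (Bᴴ * B * mpow (Bᴴ * mpow σ (-1) * B) (α - 1)) := by
  set S := mpow σ (-(1 / 2 : ℝ)) with hS_def
  have hS : Sᴴ = S := isHermitian_mpow σ _
  have hSS : S * S = mpow σ (-1) := by
    rw [hS_def, mpow_mul_mpow hσ]
    norm_num
  have hSσS : S * σ * S = mpow σ 0 := by
    rw [hS_def, mul_assoc, mul_mpow hσ, mpow_mul_mpow hσ]
    norm_num
  have hgram : (S * B)ᴴ * (S * B) = Bᴴ * mpow σ (-1) * B := by
    simp only [conjTranspose_mul, hS, ← hSS, Matrix.mul_assoc]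
  have hconj : S * (B * Bᴴ) * S = S * B * (S * B)ᴴ := by
    simp only [conjTranspose_mul, hS, Matrix.mul_assoc]
  have hweight : (S * B)ᴴ * σ * (S * B) = Bᴴ * B := by
    calc (S * B)ᴴ * σ * (S * B) = Bᴴ * (S * σ * S * B) := by
          simp only [conjTranspose_mul, hS, Matrix.mul_assoc]
      _ = Bᴴ * B := by rw [hSσS, mpow_zero_mul_of_suppLE hσ B hB]
  rw [geomQuasi, rtr, rtr, ← hS_def, hconj, mpow_mul_conjTranspose_self, hgram, ← Matrix.mul_assoc,
    trace_mul_comm, ← hweight]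
  simp only [Matrix.mul_assoc]

lemma loewnerLE_conj_mpow_neg_one {σ₁ σ₂ : Matrix n n ℂ} (hσ₁ : σ₁.PosSemidef)
    (h : loewnerLE σ₁ σ₂) (B : Matrix n m ℂ) (hB : SuppLE (B * Bᴴ) σ₁) :
    loewnerLE (Bᴴ * mpow σ₂ (-1) * B) (Bᴴ * mpow σ₁ (-1) * B) := by
  have hsolve {σ : Matrix n n ℂ} (hσ : σ.PosSemidef) (hBσ : SuppLE (B * Bᴴ) σ) :
      σ * (mpow σ (-1) * B) = B := by
    rw [← Matrix.mul_assoc, mul_mpow hσ, add_neg_cancel, mpow_zero_mul_of_suppLE hσ B hBσ]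
  have hform {σ : Matrix n n ℂ} (hσ : σ.PosSemidef) (hBσ : SuppLE (B * Bᴴ) σ) :
      (mpow σ (-1) * B)ᴴ * σ * (mpow σ (-1) * B) = Bᴴ * mpow σ (-1) * B := by
    rw [Matrix.mul_assoc, hsolve hσ hBσ, conjTranspose_mul, (isHermitian_mpow σ _).eq]
  have hσ₂ := posSemidef_of_loewnerLE hσ₁ h
  have hB₂ := hB.of_loewnerLE hσ₁ h
  rw [← hform hσ₁ hB, ← hform hσ₂ hB₂]
  exact loewnerLE_conj_of_mul_eq_mul hσ₁ h ((hsolve hσ₁ hB).trans (hsolve hσ₂ hB₂).symm)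

open scoped MatrixOrder in
lemma geomQuasi_anti {ρ σ₁ σ₂ : Matrix n n ℂ} (hρ : ρ.PosSemidef) (hσ₁ : σ₁.PosSemidef)
    (h : loewnerLE σ₁ σ₂) (hsupp : SuppLE ρ σ₁) {α : ℝ} (hα₁ : 1 < α) (hα₂ : α ≤ 2) :
    geomQuasi α ρ σ₂ ≤ geomQuasi α ρ σ₁ := by
  obtain ⟨B, rfl : ρ = B * Bᴴ⟩ := CStarAlgebra.nonneg_iff_eq_mul_star_self.mp hρ.nonneg
  have hσ₂ := posSemidef_of_loewnerLE hσ₁ h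
  have hinv₂ : (Bᴴ * mpow σ₂ (-1) * B).PosSemidef :=
    (posSemidef_mpow hσ₂ (-1)).conjTranspose_mul_mul_same B
  rw [geomQuasi_mul_conjTranspose_self hσ₁ B hsupp,
    geomQuasi_mul_conjTranspose_self hσ₂ B (hsupp.of_loewnerLE hσ₁ h)]
  have hinv := loewnerLE_conj_mpow_neg_one hσ₁ h B hsupp
  exact rtr_conjTranspose_mul_self_mul_mono B
    (loewnerLE_mpow hinv₂ hinv (sub_pos.mpr hα₁) (by linarith))

lemma elog_mono : Monotone elog := by
  intro x y hxy
  unfold elog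
  split_ifs with hx hy hy
  · exact le_rfl
  · exact bot_le
  · exact absurd (hxy.trans hy) hx
  · exact EReal.coe_le_coe_iff.mpr (Real.logb_le_logb_of_le one_lt_two (not_le.mp hx) hxy)

theorem geomRenyi_anti_mono_general {ρ σ₁ σ₂ : Matrix n n ℂ} (hρ : ρ.PosSemidef)
    (hσ₁ : σ₁.PosSemidef) (h : loewnerLE σ₁ σ₂) {α : ℝ} (hα₁ : 1 < α) (hα₂ : α ≤ 2) :
    geomRenyi α ρ σ₂ ≤ geomRenyi α ρ σ₁ := by
  by_cases hsupp : SuppLE ρ σ₁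
  · rw [geomRenyi, geomRenyi, if_pos hsupp, if_pos (hsupp.of_loewnerLE hσ₁ h)]
    have hα_inv : 0 ≤ (((α - 1)⁻¹ : ℝ) : EReal) :=
      EReal.coe_nonneg.mpr (inv_nonneg.mpr (sub_pos.mpr hα₁).le)
    exact mul_le_mul_of_nonneg_left (elog_mono (geomQuasi_anti hρ hσ₁ h hsupp hα₁ hα₂)) hα_inv
  · rw [geomRenyi.eq_def α ρ σ₁, if_neg hsupp]
    exact le_top

end GeometricRenyi

/-- Anti-monotonicity of the geometric Rényi divergence in the
second argument. -/
theorem geomRenyi_anti_mono {d : ℕ} (ρ σ₁ σ₂ : Matrix (Fin d) (Fin d) ℂ)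
    (hρ : IsState ρ) (hσ₁ : σ₁.PosSemidef) (hσ₂ : σ₂.PosSemidef)
    (h12 : loewnerLE σ₁ σ₂) (α : ℝ) (hα : 1 < α ∧ α ≤ 2) :
    geomRenyi α ρ σ₂ ≤ geomRenyi α ρ σ₁ :=
  geomRenyi_anti_mono_general hρ.1 hσ₁ h12 hα.1 hα.2

end QCD
end
end
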